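/- Let α : ℝ × ℝ → ℝ³ be a smooth solution of the vortex filament equation α_t = α_s ×_L α_ss in Minkowski 3-space such that each curve α(·,t) is a unit-speed timelike curve with smooth Frenet frame (T, N, B) satisfying ⟨T,T⟩_L = −1, ⟨N,N⟩_L = ⟨B,B⟩_L = 1, T ×_L N = B, Tₛ = κN, Nₛ = κT + τB, Bₛ = −τN with κ > 0. Then there exist smooth maps E₁, E₂ : ℝ × ℝ → ℝ³ and smooth functions k₁, k₂ : ℝ × ℝ → ℝ such that (T, E₁, E₂) is pairwise ⟨·,·⟩_L-orthogonal with ⟨E₁,E₁⟩_L = ⟨E₂,E₂⟩_L = 1, and Tₛ = k₁E₁ + k₂E₂, (E₁)ₛ = k₁T, (E₂)ₛ = k₂T, and T_t = −(k₂)ₛE₁ + (k₁)ₛE₂, (E₁)_t = −(k₂)ₛT + ½(k₁² + k₂²)E₂, (E₂)_t = (k₁)ₛT − ½(k₁² + k₂²)E₁. -/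

import Mathlib

noncomputable section

open Real

/-- Minkowski 3-space: ℝ³ as a vector type. -/
abbrev V3 : Type := Fin 3 → ℝ

/-- Lorentzian inner product ⟨x,y⟩_L = −x₁y₁ + x₂y₂ + x₃y₃ on ℝ³. -/
def lor (x y : V3) : ℝ := -(x 0 * y 0) + x 1 * y 1 + x 2 * y 2

/-- Lorentzian cross product x ×_L y = (x₃y₂ − x₂y₃, x₃y₁ − x₁y₃, x₁y₂ − x₂y₁). -/
def lcross (x y : V3) : V3 :=
  ![x 2 * y 1 - x 1 * y 2, x 2 * y 0 - x 0 * y 2, x 0 * y 1 - x 1 * y 0]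

/-- Partial derivative with respect to the first variable `s`. -/
def pds {E : Type*} [NormedAddCommGroup E] [NormedSpace ℝ E]
    (f : ℝ × ℝ → E) (p : ℝ × ℝ) : E := deriv (fun s => f (s, p.2)) p.1

/-- Partial derivative with respect to the second variable `t`. -/
def pdt {E : Type*} [NormedAddCommGroup E] [NormedSpace ℝ E]
    (f : ℝ × ℝ → E) (p : ℝ × ℝ) : E := deriv (fun t => f (p.1, t)) p.2

/-!
The rotation `E₁ = cos θ N - sin θ B`, `E₂ = sin θ N + cos θ B` of the Frenet frame subtracts `dθ`
from the rotation rate of the normal frame. That rate is `τ` in the `s`-direction and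
`ρ = ⟨N_t, B⟩` in the `t`-direction, so the claim amounts to solving `θ_s = τ`, `θ_t = ρ - κ² / 2`.
The filament equation reads `α_t = κ B`, whence `T_t = -κ τ N + κ_s B`; equality of the mixed
derivatives of `N` then gives `τ_t = ρ_s - κ κ_s`, which is the integrability condition for `θ`.
-/

section PartialDerivatives

variable {F : Type*} [NormedAddCommGroup F] [NormedSpace ℝ F] {f : ℝ × ℝ → F} {p : ℝ × ℝ}

lemma hasDerivAt_slice_fst {f' : ℝ × ℝ →L[ℝ] F} (hf : HasFDerivAt f f' p) :
    HasDerivAt (fun s => f (s, p.2)) (f' (1, 0)) p.1 :=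
  hf.comp_hasDerivAt (f := fun s => (s, p.2)) p.1
    ((hasDerivAt_id p.1).prodMk (hasDerivAt_const p.1 p.2))

lemma hasDerivAt_slice_snd {f' : ℝ × ℝ →L[ℝ] F} (hf : HasFDerivAt f f' p) :
    HasDerivAt (fun t => f (p.1, t)) (f' (0, 1)) p.2 :=
  hf.comp_hasDerivAt (f := fun t => (p.1, t)) p.2
    ((hasDerivAt_const p.2 p.1).prodMk (hasDerivAt_id p.2))

lemma pds_eq_of_hasFDerivAt {f' : ℝ × ℝ →L[ℝ] F} (hf : HasFDerivAt f f' p) :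
    pds f p = f' (1, 0) :=
  (hasDerivAt_slice_fst hf).deriv

lemma pdt_eq_of_hasFDerivAt {f' : ℝ × ℝ →L[ℝ] F} (hf : HasFDerivAt f f' p) :
    pdt f p = f' (0, 1) :=
  (hasDerivAt_slice_snd hf).deriv

lemma pds_eq_fderiv (hf : Differentiable ℝ f) : pds f = fun p => fderiv ℝ f p (1, 0) :=
  funext fun p => pds_eq_of_hasFDerivAt (hf p).hasFDerivAt

lemma pdt_eq_fderiv (hf : Differentiable ℝ f) : pdt f = fun p => fderiv ℝ f p (0, 1) :=
  funext fun p => pdt_eq_of_hasFDerivAt (hf p).hasFDerivAt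

lemma hasDerivAt_pds (hf : DifferentiableAt ℝ f p) :
    HasDerivAt (fun s => f (s, p.2)) (pds f p) p.1 :=
  (hasDerivAt_slice_fst hf.hasFDerivAt).differentiableAt.hasDerivAt

lemma hasDerivAt_pdt (hf : DifferentiableAt ℝ f p) :
    HasDerivAt (fun t => f (p.1, t)) (pdt f p) p.2 :=
  (hasDerivAt_slice_snd hf.hasFDerivAt).differentiableAt.hasDerivAt

lemma fderiv_apply_eq_pds_add_pdt (hf : DifferentiableAt ℝ f p) (x : ℝ × ℝ) :
    fderiv ℝ f p x = x.1 • pds f p + x.2 • pdt f p := by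
  rw [pds_eq_of_hasFDerivAt hf.hasFDerivAt, pdt_eq_of_hasFDerivAt hf.hasFDerivAt, ← map_smul,
    ← map_smul, ← map_add]
  simp

lemma contDiff_pds {m n : WithTop ℕ∞} (hf : ContDiff ℝ n f) (hmn : m + 1 ≤ n) :
    ContDiff ℝ m (pds f) := by
  rw [pds_eq_fderiv ((hf.of_le (le_add_self.trans hmn)).differentiable one_ne_zero)]
  exact (hf.fderiv_right hmn).clm_apply contDiff_const

lemma contDiff_pdt {m n : WithTop ℕ∞} (hf : ContDiff ℝ n f) (hmn : m + 1 ≤ n) :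
    ContDiff ℝ m (pdt f) := by
  rw [pdt_eq_fderiv ((hf.of_le (le_add_self.trans hmn)).differentiable one_ne_zero)]
  exact (hf.fderiv_right hmn).clm_apply contDiff_const

lemma pdt_pds_comm (hf : ContDiff ℝ 2 f) (p : ℝ × ℝ) : pdt (pds f) p = pds (pdt f) p := by
  have hf' : DifferentiableAt ℝ (fderiv ℝ f) p :=
    (hf.fderiv_right (m := 1) one_add_one_eq_two.le).differentiable one_ne_zero p
  have hasFDerivAt_apply (v : ℝ × ℝ) := hf'.hasFDerivAt.clm_apply (hasFDerivAt_const v p)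
  have symm : IsSymmSndFDerivAt ℝ f p := hf.contDiffAt.isSymmSndFDerivAt (by simp)
  rw [pds_eq_fderiv (hf.differentiable two_ne_zero), pdt_eq_fderiv (hf.differentiable two_ne_zero),
    pdt_eq_of_hasFDerivAt (hasFDerivAt_apply _), pds_eq_of_hasFDerivAt (hasFDerivAt_apply _)]
  simpa using symm.eq (0, 1) (1, 0)

open ContinuousLinearMap in
lemma exists_hasFDerivAt_of_pdt_eq_pds [CompleteSpace F] {a b : ℝ × ℝ → F}
    (ha : Differentiable ℝ a) (hb : Differentiable ℝ b) (h : ∀ p, pdt a p = pds b p) :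
    ∃ θ : ℝ × ℝ → F, ∀ p,
      HasFDerivAt θ ((fst ℝ ℝ ℝ).smulRight (a p) + (snd ℝ ℝ ℝ).smulRight (b p)) p := by
  let form (p : ℝ × ℝ) := (fst ℝ ℝ ℝ).smulRight (a p) + (snd ℝ ℝ ℝ).smulRight (b p)
  have hform (p : ℝ × ℝ) : HasFDerivAt form
      (smulRightL ℝ (ℝ × ℝ) F (fst ℝ ℝ ℝ) ∘L fderiv ℝ a p +
        smulRightL ℝ (ℝ × ℝ) F (snd ℝ ℝ ℝ) ∘L fderiv ℝ b p) p :=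
    ((smulRightL ℝ (ℝ × ℝ) F (fst ℝ ℝ ℝ)).hasFDerivAt.comp p (ha p).hasFDerivAt).add
      ((smulRightL ℝ (ℝ × ℝ) F (snd ℝ ℝ ℝ)).hasFDerivAt.comp p (hb p).hasFDerivAt)
  have form_closed (p x y : ℝ × ℝ) : fderiv ℝ form p x y = fderiv ℝ form p y x := by
    rw [(hform p).fderiv]
    simp only [add_apply, comp_apply, smulRightL_apply_apply, smulRight_apply,
      fderiv_apply_eq_pds_add_pdt (ha p), fderiv_apply_eq_pds_add_pdt (hb p), h]
    simp only [coe_fst', coe_snd', smul_add]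
    module
  obtain ⟨θ, hθ⟩ := convex_univ.exists_forall_hasFDerivAt_of_fderiv_symmetric isOpen_univ
    (fun p _ => (hform p).differentiableAt.differentiableWithinAt) fun p _ => form_closed p
  exact ⟨θ, fun p => hθ p trivial⟩

lemma exists_contDiff_pds_pdt_of_pdt_eq_pds [CompleteSpace F] {a b : ℝ × ℝ → F}
    (ha : ContDiff ℝ (⊤ : ℕ∞) a) (hb : ContDiff ℝ (⊤ : ℕ∞) b) (h : ∀ p, pdt a p = pds b p) :
    ∃ θ : ℝ × ℝ → F, ContDiff ℝ (⊤ : ℕ∞) θ ∧ ∀ p, pds θ p = a p ∧ pdt θ p = b p := by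
  obtain ⟨θ, hθ⟩ := exists_hasFDerivAt_of_pdt_eq_pds (ha.differentiable (by simp))
    (hb.differentiable (by simp)) h
  refine ⟨θ, contDiff_infty_iff_fderiv.2 ⟨fun p => (hθ p).differentiableAt, ?_⟩, fun p => ⟨?_, ?_⟩⟩
  · rw [funext fun p => (hθ p).fderiv]
    fun_prop
  · simpa using pds_eq_of_hasFDerivAt (hθ p)
  · simpa using pdt_eq_of_hasFDerivAt (hθ p)

end PartialDerivatives

section LorentzAlgebra

variable (x y z : V3) (c : ℝ)

lemma lor_comm : lor x y = lor y x := by unfold lor; ring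

lemma lor_add_left : lor (x + y) z = lor x z + lor y z := by simp only [lor, Pi.add_apply]; ring

lemma lor_sub_left : lor (x - y) z = lor x z - lor y z := by simp only [lor, Pi.sub_apply]; ring

lemma lor_smul_left : lor (c • x) y = c * lor x y := by
  simp only [lor, Pi.smul_apply, smul_eq_mul]; ring

lemma lor_add_right : lor x (y + z) = lor x y + lor x z := by
  simp only [lor_comm x, lor_add_left]

lemma lor_sub_right : lor x (y - z) = lor x y - lor x z := by
  simp only [lor_comm x, lor_sub_left]

lemma lor_smul_right : lor x (c • y) = c * lor x y := by
  simp only [lor_comm x, lor_smul_left]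

lemma lor_lcross_self_left : lor x (lcross x y) = 0 := by
  simp only [lor, lcross, Matrix.cons_val]
  ring

lemma lor_lcross_self_right : lor y (lcross x y) = 0 := by
  simp only [lor, lcross, Matrix.cons_val]
  ring

lemma lor_lcross_lcross :
    lor (lcross x y) (lcross x y) = lor x y ^ 2 - lor x x * lor y y := by
  simp only [lor, lcross, Matrix.cons_val]
  ring

lemma lcross_smul_right : lcross x (c • y) = c • lcross x y := by
  ext i; fin_cases i <;> simp [lcross] <;> ring

lemma contDiff_lor {G : Type*} [NormedAddCommGroup G] [NormedSpace ℝ G] {n : WithTop ℕ∞}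
    {f g : G → V3} (hf : ContDiff ℝ n f) (hg : ContDiff ℝ n g) :
    ContDiff ℝ n fun q => lor (f q) (g q) := by
  unfold lor; fun_prop

lemma hasDerivAt_lor {u v : ℝ → V3} {u' v' : V3} {x : ℝ} (hu : HasDerivAt u u' x)
    (hv : HasDerivAt v v' x) :
    HasDerivAt (fun r => lor (u r) (v r)) (lor u' (v x) + lor (u x) v') x := by
  have hprod (i : Fin 3) := (hasDerivAt_pi.1 hu i).mul (hasDerivAt_pi.1 hv i)
  refine (((hprod 0).neg.add (hprod 1)).add (hprod 2)).congr_deriv ?_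
  unfold lor; ring

end LorentzAlgebra

/-- `(T, N, B)` is an orthonormal basis of Minkowski 3-space with timelike first vector. -/
structure IsLorentzFrame (T N B : V3) : Prop where
  fst_fst : lor T T = -1
  snd_snd : lor N N = 1
  trd_trd : lor B B = 1
  fst_snd : lor T N = 0
  fst_trd : lor T B = 0
  snd_trd : lor N B = 0

/-- The first vector of the pair `(u, v)` rotated by the angle `-θ` in its plane; the sign makes the
rotation rate of a moving pair drop by the derivative of `θ`. -/
def rotateFst {E : Type*} [AddCommGroup E] [Module ℝ E] (θ : ℝ) (u v : E) : E :=
  cos θ • u - sin θ • v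

/-- The second vector of the pair `(u, v)` rotated by the angle `-θ` in its plane, completing
`rotateFst θ u v`. -/
def rotateSnd {E : Type*} [AddCommGroup E] [Module ℝ E] (θ : ℝ) (u v : E) : E :=
  sin θ • u + cos θ • v

namespace IsLorentzFrame

-- By the Lagrange identity, `⟨T ×_L N, T ×_L N⟩ = 1 + ⟨T, N⟩²`, which forces `⟨T, N⟩ = 0`.
lemma of_lcross {T N B : V3} (hTT : lor T T = -1) (hNN : lor N N = 1) (hBB : lor B B = 1)
    (hTxN : lcross T N = B) : IsLorentzFrame T N B := by
  subst hTxN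
  have hTN : lor T N ^ 2 = 0 := by
    rw [lor_lcross_lcross, hTT, hNN] at hBB
    linarith
  exact ⟨hTT, hNN, hBB, pow_eq_zero_iff two_ne_zero |>.1 hTN, lor_lcross_self_left T N,
    lor_lcross_self_right T N⟩

open scoped Matrix in
-- Orthonormality says that the matrix with rows `T, N, B` has a right inverse, which is then
-- also a left inverse.
lemma eq_sum {T N B : V3} (h : IsLorentzFrame T N B) (v : V3) :
    v = -lor v T • T + lor v N • N + lor v B • B := by
  let frame : Matrix (Fin 3) (Fin 3) ℝ := .of ![T, N, B]
  let dual : Matrix (Fin 3) (Fin 3) ℝ :=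
    !![T 0, -N 0, -B 0; -T 1, N 1, B 1; -T 2, N 2, B 2]
  have frame_mul_dual : frame * dual = 1 := by
    obtain ⟨hTT, hNN, hBB, hTN, hTB, hNB⟩ := h
    simp only [lor] at hTT hNN hBB hTN hTB hNB
    ext i j
    fin_cases i <;> fin_cases j <;>
      simp [frame, dual, Matrix.mul_apply, Fin.sum_univ_three] <;> linarith
  have vecMul_dual : v ᵥ* dual = ![-lor v T, lor v N, lor v B] := by
    ext j
    fin_cases j <;> simp [dual, Matrix.vecMul, dotProduct, Fin.sum_univ_three, lor]
    ring
  have vecMul_frame : ![-lor v T, lor v N, lor v B] ᵥ* frame = v := by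
    rw [← vecMul_dual, Matrix.vecMul_vecMul, mul_eq_one_comm.1 frame_mul_dual, Matrix.vecMul_one]
  ext i
  simpa [frame, Matrix.vecMul, dotProduct, Fin.sum_univ_three] using congrFun vecMul_frame.symm i

lemma rotate {T N B : V3} (h : IsLorentzFrame T N B) (θ : ℝ) :
    IsLorentzFrame T (rotateFst θ N B) (rotateSnd θ N B) := by
  have hBN : lor B N = 0 := by rw [lor_comm, h.snd_trd]
  constructor <;>
    simp only [rotateFst, rotateSnd, lor_add_left, lor_add_right, lor_sub_left, lor_sub_right,
      lor_smul_left, lor_smul_right, h.fst_fst, h.snd_snd, h.trd_trd, h.fst_snd, h.fst_trd,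
      h.snd_trd, hBN] <;>
    linarith [sin_sq_add_cos_sq θ]

end IsLorentzFrame

/-- The structure equations at `x` of a moving Lorentz frame: `k₁`, `k₂` are the components of the
velocity of `T`, and `ρ` is the rotation rate of `(N, B)` in the normal plane. -/
structure HasFrameDerivAt {E : Type*} [NormedAddCommGroup E] [NormedSpace ℝ E] (T N B : ℝ → E)
    (k₁ k₂ ρ x : ℝ) : Prop where
  fst : HasDerivAt T (k₁ • N x + k₂ • B x) x
  snd : HasDerivAt N (k₁ • T x + ρ • B x) x
  trd : HasDerivAt B (k₂ • T x - ρ • N x) x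

lemma HasFrameDerivAt.rotate {E : Type*} [NormedAddCommGroup E] [NormedSpace ℝ E]
    {T N B : ℝ → E} {θ : ℝ → ℝ} {k₁ k₂ ρ θ' x : ℝ} (h : HasFrameDerivAt T N B k₁ k₂ ρ x)
    (hθ : HasDerivAt θ θ' x) :
    HasFrameDerivAt T (fun r => rotateFst (θ r) (N r) (B r)) (fun r => rotateSnd (θ r) (N r) (B r))
      (k₁ * cos (θ x) - k₂ * sin (θ x)) (k₁ * sin (θ x) + k₂ * cos (θ x)) (ρ - θ') x := by
  have hsc := sin_sq_add_cos_sq (θ x)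
  simp only [rotateFst, rotateSnd]
  refine ⟨h.fst.congr_deriv ?_, ((hθ.cos.smul h.snd).sub (hθ.sin.smul h.trd)).congr_deriv ?_,
    ((hθ.sin.smul h.snd).add (hθ.cos.smul h.trd)).congr_deriv ?_⟩
  · match_scalars
    · linear_combination -k₁ * hsc
    · linear_combination -k₂ * hsc
  · module
  · module

lemma IsLorentzFrame.hasFrameDerivAt {T N B : ℝ → V3} {N' B' : V3} {k₁ k₂ x : ℝ}
    (hF : ∀ r, IsLorentzFrame (T r) (N r) (B r)) (hT : HasDerivAt T (k₁ • N x + k₂ • B x) x)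
    (hN : HasDerivAt N N' x) (hB : HasDerivAt B B' x) :
    HasFrameDerivAt T N B k₁ k₂ (lor N' (B x)) x := by
  have lor_deriv_eq_neg {u v : ℝ → V3} {u' v' : V3} {c : ℝ} (hu : HasDerivAt u u' x)
      (hv : HasDerivAt v v' x) (huv : ∀ r, lor (u r) (v r) = c) :
      lor u' (v x) = -lor v' (u x) := by
    have := (hasDerivAt_lor hu hv).unique (by simpa only [huv] using hasDerivAt_const x c)
    rw [lor_comm v']
    linarith
  obtain ⟨-, hNN, hBB, -, -, hNB⟩ := hF x
  have hN'T : lor N' (T x) = -k₁ := by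
    rw [lor_deriv_eq_neg hN hT fun r => by rw [lor_comm, (hF r).fst_snd], lor_add_left,
      lor_smul_left, lor_smul_left, hNN, lor_comm (B x), hNB, mul_one, mul_zero, add_zero]
  have hN'N : lor N' (N x) = 0 := by
    linarith [lor_deriv_eq_neg hN hN fun r => (hF r).snd_snd]
  have hB'T : lor B' (T x) = -k₂ := by
    rw [lor_deriv_eq_neg hB hT fun r => by rw [lor_comm, (hF r).fst_trd], lor_add_left,
      lor_smul_left, lor_smul_left, hNB, hBB, mul_one, mul_zero, zero_add]
  have hB'N : lor B' (N x) = -lor N' (B x) :=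
    lor_deriv_eq_neg hB hN fun r => by rw [lor_comm, (hF r).snd_trd]
  have hB'B : lor B' (B x) = 0 := by
    linarith [lor_deriv_eq_neg hB hB fun r => (hF r).trd_trd]
  refine ⟨hT, hN.congr_deriv (((hF x).eq_sum N').trans ?_),
    hB.congr_deriv (((hF x).eq_sum B').trans ?_)⟩
  · rw [hN'T, hN'N]
    module
  · rw [hB'T, hB'N, hB'B]
    module

/-- The structure equations `HasFrameDerivAt` of a two-parameter frame in the direction `s`. -/
def HasFramePds {E : Type*} [NormedAddCommGroup E] [NormedSpace ℝ E] (T N B : ℝ × ℝ → E)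
    (k₁ k₂ ρ : ℝ × ℝ → ℝ) : Prop :=
  ∀ p, HasFrameDerivAt (fun s => T (s, p.2)) (fun s => N (s, p.2)) (fun s => B (s, p.2))
    (k₁ p) (k₂ p) (ρ p) p.1

/-- The structure equations `HasFrameDerivAt` of a two-parameter frame in the direction `t`. -/
def HasFramePdt {E : Type*} [NormedAddCommGroup E] [NormedSpace ℝ E] (T N B : ℝ × ℝ → E)
    (k₁ k₂ ρ : ℝ × ℝ → ℝ) : Prop :=
  ∀ p, HasFrameDerivAt (fun t => T (p.1, t)) (fun t => N (p.1, t)) (fun t => B (p.1, t))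
    (k₁ p) (k₂ p) (ρ p) p.2

-- The rotation rates are `⟨N_s, B⟩` and `⟨N_t, B⟩`, whose cross derivatives share the term
-- `⟨N_st, B⟩`.
lemma pdt_sub_pds_rotationRate {T N B : ℝ × ℝ → V3} {k₁ k₂ ρ l₁ l₂ σ : ℝ × ℝ → ℝ}
    (hF : ∀ p, IsLorentzFrame (T p) (N p) (B p)) (hN : ContDiff ℝ 2 N)
    (hs : HasFramePds T N B k₁ k₂ ρ) (ht : HasFramePdt T N B l₁ l₂ σ) (p : ℝ × ℝ) :
    pdt ρ p - pds σ p = k₂ p * l₁ p - k₁ p * l₂ p := by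
  have hNs (q) : pds N q = k₁ q • T q + ρ q • B q := (hs q).snd.deriv
  have hNt (q) : pdt N q = l₁ q • T q + σ q • B q := (ht q).snd.deriv
  have hρ (q) : lor (pds N q) (B q) = ρ q := by
    simp [hNs, lor_add_left, lor_smul_left, (hF q).fst_trd, (hF q).trd_trd]
  have hσ (q) : lor (pdt N q) (B q) = σ q := by
    simp [hNt, lor_add_left, lor_smul_left, (hF q).fst_trd, (hF q).trd_trd]
  have hρt : pdt ρ p = lor (pdt (pds N) p) (B p) + lor (pds N p) (l₂ p • T p - σ p • N p) := by
    rw [← funext hρ]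
    exact (hasDerivAt_lor (hasDerivAt_pdt ((contDiff_pds hN one_add_one_eq_two.le).differentiable
      one_ne_zero p)) (ht p).trd).deriv
  have hσs : pds σ p = lor (pds (pdt N) p) (B p) + lor (pdt N p) (k₂ p • T p - ρ p • N p) := by
    rw [← funext hσ]
    exact (hasDerivAt_lor (hasDerivAt_pds ((contDiff_pdt hN one_add_one_eq_two.le).differentiable
      one_ne_zero p)) (hs p).trd).deriv
  obtain ⟨hTT, -, -, hTN, hTB, hNB⟩ := hF p
  rw [hρt, hσs, pdt_pds_comm hN, hNs, hNt]
  simp only [lor_add_left, lor_smul_left, lor_sub_right, lor_smul_right, lor_comm (B p), hTT, hTN,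
    hTB, hNB]
  ring

section ParallelFrame

variable {T N B : ℝ × ℝ → V3} {κ τ ρ : ℝ × ℝ → ℝ}

lemma exists_parallel_angle {l : ℝ × ℝ → ℝ} (hN : ContDiff ℝ 2 N)
    (hκ : ContDiff ℝ (⊤ : ℕ∞) κ) (hτ : ContDiff ℝ (⊤ : ℕ∞) τ) (hρ : ContDiff ℝ (⊤ : ℕ∞) ρ)
    (hF : ∀ p, IsLorentzFrame (T p) (N p) (B p)) (hs : HasFramePds T N B κ 0 τ)
    (ht : HasFramePdt T N B l (pds κ) ρ) :
    ∃ θ : ℝ × ℝ → ℝ, ContDiff ℝ (⊤ : ℕ∞) θ ∧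
      ∀ p, pds θ p = τ p ∧ pdt θ p = ρ p - κ p ^ 2 / 2 := by
  refine exists_contDiff_pds_pdt_of_pdt_eq_pds hτ (by fun_prop) fun p => ?_
  have hpds : pds (fun q => ρ q - κ q ^ 2 / 2) p = pds ρ p - κ p * pds κ p := by
    refine ((hasDerivAt_pds (hρ.differentiable (by simp) p)).sub
      (((hasDerivAt_pds (hκ.differentiable (by simp) p)).pow 2).div_const 2)).deriv.trans ?_
    simp only [Nat.cast_ofNat, Prod.mk.eta]
    ring
  have compatibility := pdt_sub_pds_rotationRate hF hN hs ht p
  rw [Pi.zero_apply, zero_mul] at compatibility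
  linarith

lemma exists_parallel_frame (hN : ContDiff ℝ (⊤ : ℕ∞) N) (hB : ContDiff ℝ (⊤ : ℕ∞) B)
    (hκ : ContDiff ℝ (⊤ : ℕ∞) κ) (hτ : ContDiff ℝ (⊤ : ℕ∞) τ) (hρ : ContDiff ℝ (⊤ : ℕ∞) ρ)
    (hF : ∀ p, IsLorentzFrame (T p) (N p) (B p)) (hs : HasFramePds T N B κ 0 τ)
    (ht : HasFramePdt T N B (fun p => -(κ p * τ p)) (pds κ) ρ) :
    ∃ E₁ E₂ : ℝ × ℝ → V3, ∃ k₁ k₂ : ℝ × ℝ → ℝ,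
      ContDiff ℝ (⊤ : ℕ∞) E₁ ∧ ContDiff ℝ (⊤ : ℕ∞) E₂ ∧
      ContDiff ℝ (⊤ : ℕ∞) k₁ ∧ ContDiff ℝ (⊤ : ℕ∞) k₂ ∧
      (∀ p, IsLorentzFrame (T p) (E₁ p) (E₂ p)) ∧ HasFramePds T E₁ E₂ k₁ k₂ 0 ∧
      HasFramePdt T E₁ E₂ (fun p => -pds k₂ p) (pds k₁) fun p => (k₁ p ^ 2 + k₂ p ^ 2) / 2 := by
  obtain ⟨θ, hθ, hdθ⟩ := exists_parallel_angle (hN.of_le (by norm_cast)) hκ hτ hρ hF hs ht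
  have hθs (p) := (hasDerivAt_pds (hθ.differentiable (by simp) p)).congr_deriv (hdθ p).1
  have hθt (p) := (hasDerivAt_pdt (hθ.differentiable (by simp) p)).congr_deriv (hdθ p).2
  have hκs (p) := hasDerivAt_pds (hκ.differentiable (by simp) p)
  have hk₁s (p) : pds (fun q => κ q * cos (θ q)) p =
      pds κ p * cos (θ p) + κ p * (-sin (θ p) * τ p) := ((hκs p).mul (hθs p).cos).deriv
  have hk₂s (p) : pds (fun q => κ q * sin (θ q)) p =
      pds κ p * sin (θ p) + κ p * (cos (θ p) * τ p) := ((hκs p).mul (hθs p).sin).deriv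
  refine ⟨fun p => rotateFst (θ p) (N p) (B p), fun p => rotateSnd (θ p) (N p) (B p),
    fun p => κ p * cos (θ p), fun p => κ p * sin (θ p), by unfold rotateFst; fun_prop,
    by unfold rotateSnd; fun_prop, by fun_prop, by fun_prop, fun p => (hF p).rotate (θ p),
    fun p => ?_, fun p => ?_⟩
  · simpa using (hs p).rotate (hθs p)
  · convert (ht p).rotate (hθt p) using 1
    · simp only [hk₂s]; ring
    · simp only [hk₁s]; ring
    · linear_combination κ p ^ 2 / 2 * sin_sq_add_cos_sq (θ p)

end ParallelFrame

section VortexFilament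

variable {α T N B : ℝ × ℝ → V3} {κ τ : ℝ × ℝ → ℝ}

lemma pdt_eq_smul_binormal (hvfe : ∀ p, pdt α p = lcross (pds α p) (pds (pds α) p))
    (hαs : ∀ p, pds α p = T p) (hTxN : ∀ p, lcross (T p) (N p) = B p)
    (hTs : ∀ p, pds T p = κ p • N p) (p : ℝ × ℝ) : pdt α p = κ p • B p := by
  rw [hvfe, hαs, show pds α = T from funext hαs, hTs, lcross_smul_right, hTxN]

lemma pdt_tangent_of_binormal_flow (hα : ContDiff ℝ 2 α) (hκ : Differentiable ℝ κ)
    (hB : Differentiable ℝ B) (hαs : ∀ p, pds α p = T p) (hαt : ∀ p, pdt α p = κ p • B p)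
    (hBs : ∀ p, pds B p = -(τ p) • N p) (p : ℝ × ℝ) :
    pdt T p = -(κ p * τ p) • N p + pds κ p • B p := by
  have hκB : pds (fun q => κ q • B q) p = κ p • pds B p + pds κ p • B p :=
    ((hasDerivAt_pds (hκ p)).smul (hasDerivAt_pds (hB p))).deriv
  rw [← funext hαs, pdt_pds_comm hα, funext hαt, hκB, hBs]
  module

lemma hasFramePds_of_frenet (hT : Differentiable ℝ T) (hN : Differentiable ℝ N)
    (hB : Differentiable ℝ B) (hTs : ∀ p, pds T p = κ p • N p)
    (hNs : ∀ p, pds N p = κ p • T p + τ p • B p) (hBs : ∀ p, pds B p = -(τ p) • N p) :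
    HasFramePds T N B κ 0 τ := fun p =>
  ⟨(hasDerivAt_pds (hT p)).congr_deriv (by simp [hTs]),
    (hasDerivAt_pds (hN p)).congr_deriv (hNs p),
    (hasDerivAt_pds (hB p)).congr_deriv (by simp [hBs])⟩

lemma hasFramePdt_of_pdt_tangent {k₁ k₂ : ℝ × ℝ → ℝ} (hT : Differentiable ℝ T)
    (hN : Differentiable ℝ N) (hB : Differentiable ℝ B)
    (hF : ∀ p, IsLorentzFrame (T p) (N p) (B p))
    (hTt : ∀ p, pdt T p = k₁ p • N p + k₂ p • B p) :
    HasFramePdt T N B k₁ k₂ fun p => lor (pdt N p) (B p) := fun p =>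
  IsLorentzFrame.hasFrameDerivAt (fun t => hF (p.1, t))
    ((hasDerivAt_pdt (hT p)).congr_deriv (hTt p)) (hasDerivAt_pdt (hN p)) (hasDerivAt_pdt (hB p))

end VortexFilament

theorem statement6_general (α T N B : ℝ × ℝ → V3) (κ τ : ℝ × ℝ → ℝ)
    (hα : ContDiff ℝ (⊤ : ℕ∞) α) (hT : ContDiff ℝ (⊤ : ℕ∞) T) (hN : ContDiff ℝ (⊤ : ℕ∞) N)
    (hB : ContDiff ℝ (⊤ : ℕ∞) B) (hκ : ContDiff ℝ (⊤ : ℕ∞) κ) (hτ : ContDiff ℝ (⊤ : ℕ∞) τ)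
    (hvfe : ∀ p, pdt α p = lcross (pds α p) (pds (pds α) p))
    (hαs : ∀ p, pds α p = T p)
    (hTT : ∀ p, lor (T p) (T p) = -1)
    (hNN : ∀ p, lor (N p) (N p) = 1)
    (hBB : ∀ p, lor (B p) (B p) = 1)
    (hTxN : ∀ p, lcross (T p) (N p) = B p)
    (hTs : ∀ p, pds T p = κ p • N p)
    (hNs : ∀ p, pds N p = κ p • T p + τ p • B p)
    (hBs : ∀ p, pds B p = -(τ p) • N p) :
    ∃ E₁ E₂ : ℝ × ℝ → V3, ∃ k₁ k₂ : ℝ × ℝ → ℝ,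
      ContDiff ℝ (⊤ : ℕ∞) E₁ ∧ ContDiff ℝ (⊤ : ℕ∞) E₂ ∧
      ContDiff ℝ (⊤ : ℕ∞) k₁ ∧ ContDiff ℝ (⊤ : ℕ∞) k₂ ∧
      (∀ p, lor (E₁ p) (E₁ p) = 1) ∧
      (∀ p, lor (E₂ p) (E₂ p) = 1) ∧
      (∀ p, lor (T p) (E₁ p) = 0) ∧
      (∀ p, lor (T p) (E₂ p) = 0) ∧
      (∀ p, lor (E₁ p) (E₂ p) = 0) ∧
      (∀ p, pds T p = k₁ p • E₁ p + k₂ p • E₂ p) ∧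
      (∀ p, pds E₁ p = k₁ p • T p) ∧
      (∀ p, pds E₂ p = k₂ p • T p) ∧
      (∀ p, pdt T p = -(pds k₂ p) • E₁ p + (pds k₁ p) • E₂ p) ∧
      (∀ p, pdt E₁ p = -(pds k₂ p) • T p + ((k₁ p ^ 2 + k₂ p ^ 2) / 2) • E₂ p) ∧
      (∀ p, pdt E₂ p = (pds k₁ p) • T p - ((k₁ p ^ 2 + k₂ p ^ 2) / 2) • E₁ p) := by
  have hdT : Differentiable ℝ T := hT.differentiable (by simp)
  have hdN : Differentiable ℝ N := hN.differentiable (by simp)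
  have hdB : Differentiable ℝ B := hB.differentiable (by simp)
  have hF (p) : IsLorentzFrame (T p) (N p) (B p) := .of_lcross (hTT p) (hNN p) (hBB p) (hTxN p)
  have hs : HasFramePds T N B κ 0 τ := hasFramePds_of_frenet hdT hdN hdB hTs hNs hBs
  have hαt : ∀ p, pdt α p = κ p • B p := pdt_eq_smul_binormal hvfe hαs hTxN hTs
  have hTt : ∀ p, pdt T p = -(κ p * τ p) • N p + pds κ p • B p :=
    pdt_tangent_of_binormal_flow (hα.of_le (by norm_cast)) (hκ.differentiable (by simp)) hdB hαs
      hαt hBs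
  have ht := hasFramePdt_of_pdt_tangent hdT hdN hdB hF hTt
  have hρ := contDiff_lor (contDiff_pdt hN (by simp)) hB
  obtain ⟨E₁, E₂, k₁, k₂, hE₁, hE₂, hk₁, hk₂, hE, hEs, hEt⟩ :=
    exists_parallel_frame hN hB hκ hτ hρ hF hs ht
  exact ⟨E₁, E₂, k₁, k₂, hE₁, hE₂, hk₁, hk₂, fun p => (hE p).snd_snd, fun p => (hE p).trd_trd,
    fun p => (hE p).fst_snd, fun p => (hE p).fst_trd, fun p => (hE p).snd_trd,
    fun p => (hEs p).fst.deriv, fun p => (hEs p).snd.deriv.trans (by simp),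
    fun p => (hEs p).trd.deriv.trans (by simp), fun p => (hEt p).fst.deriv,
    fun p => (hEt p).snd.deriv, fun p => (hEt p).trd.deriv⟩

/-- For a smooth solution `α` of the vortex filament equation whose
curves `α(·,t)` are unit-speed timelike with smooth Frenet frame `(T,N,B)`
(`⟨T,T⟩_L = −1`, `⟨N,N⟩_L = ⟨B,B⟩_L = 1`, `T ×_L N = B`, Frenet equations with
`κ > 0`), there exists a parallel normal frame `(T,E₁,E₂)` with principal curvatures
`k₁, k₂` satisfying the stated `s`- and `t`-evolution equations. -/
theorem statement6 (α T N B : ℝ × ℝ → V3) (κ τ : ℝ × ℝ → ℝ)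
    (hα : ContDiff ℝ (⊤ : ℕ∞) α) (hT : ContDiff ℝ (⊤ : ℕ∞) T) (hN : ContDiff ℝ (⊤ : ℕ∞) N)
    (hB : ContDiff ℝ (⊤ : ℕ∞) B) (hκ : ContDiff ℝ (⊤ : ℕ∞) κ) (hτ : ContDiff ℝ (⊤ : ℕ∞) τ)
    (hvfe : ∀ p, pdt α p = lcross (pds α p) (pds (pds α) p))
    (hαs : ∀ p, pds α p = T p)
    (hTT : ∀ p, lor (T p) (T p) = -1)
    (hNN : ∀ p, lor (N p) (N p) = 1)
    (hBB : ∀ p, lor (B p) (B p) = 1)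
    (hTxN : ∀ p, lcross (T p) (N p) = B p)
    (hTs : ∀ p, pds T p = κ p • N p)
    (hNs : ∀ p, pds N p = κ p • T p + τ p • B p)
    (hBs : ∀ p, pds B p = -(τ p) • N p)
    (hκpos : ∀ p, 0 < κ p) :
    ∃ E₁ E₂ : ℝ × ℝ → V3, ∃ k₁ k₂ : ℝ × ℝ → ℝ,
      ContDiff ℝ (⊤ : ℕ∞) E₁ ∧ ContDiff ℝ (⊤ : ℕ∞) E₂ ∧ ContDiff ℝ (⊤ : ℕ∞) k₁ ∧ ContDiff ℝ (⊤ : ℕ∞) k₂ ∧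
      (∀ p, lor (E₁ p) (E₁ p) = 1) ∧
      (∀ p, lor (E₂ p) (E₂ p) = 1) ∧
      (∀ p, lor (T p) (E₁ p) = 0) ∧
      (∀ p, lor (T p) (E₂ p) = 0) ∧
      (∀ p, lor (E₁ p) (E₂ p) = 0) ∧
      (∀ p, pds T p = k₁ p • E₁ p + k₂ p • E₂ p) ∧
      (∀ p, pds E₁ p = k₁ p • T p) ∧
      (∀ p, pds E₂ p = k₂ p • T p) ∧
      (∀ p, pdt T p = -(pds k₂ p) • E₁ p + (pds k₁ p) • E₂ p) ∧
      (∀ p, pdt E₁ p = -(pds k₂ p) • T p + ((k₁ p ^ 2 + k₂ p ^ 2) / 2) • E₂ p) ∧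
      (∀ p, pdt E₂ p = (pds k₁ p) • T p - ((k₁ p ^ 2 + k₂ p ^ 2) / 2) • E₁ p) :=
  statement6_general α T N B κ τ hα hT hN hB hκ hτ hvfe hαs hTT hNN hBB hTxN hTs hNs hBs
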